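/- Consider an angle system on the tetrahedron: six angles α_{ij} = α_{ji} ∈ (0,π) assigned to the edges {i,j} ⊂ {1,2,3,4} such that at each vertex i, with {j,k,l} = {1,2,3,4}\{i}, the triple (α_{ij}, α_{ik}, α_{il}) is spherical. Then for the edge {1,2}: (cos β³₁₂ + cos β¹₂₃ · cos β²₁₃)/(sin β¹₂₃ · sin β²₁₃) = (cos β⁴₁₂ + cos β¹₂₄ · cos β²₁₄)/(sin β¹₂₄ · sin β²₁₄); that is, the cosh-length of an edge computed in either of the two faces containing it is the same. -/

import Mathlib

/-!
View the angle system as the Gram matrix of the outward face normals of a tetrahedron, with entry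
`-cos αᵢⱼ` for the two faces meeting along the edge `{i, j}`. Substituting the face angles into
the law of cosines turns the cosh-length of the edge `{1, 2}` into `C₁₂ / (√C₁₁ * √C₂₂)`, where
`C` is the cofactor matrix. The choice between the faces `{1, 2, 3}` and `{1, 2, 4}` only exchanges
the labels `3` and `4`, and these three cofactors are invariant under that exchange.
-/

open Real

/-- `coshLen a b c` is the quantity (cos a + cos b · cos c)/(sin b · sin c), the cosine
(or hyperbolic cosine) of the generalized length of the edge opposite the angle `a` in a
Möbius triangle with angles `a`, `b`, `c`. -/
noncomputable def coshLen (a b c : ℝ) : ℝ :=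
  (Real.cos a + Real.cos b * Real.cos c) / (Real.sin b * Real.sin c)

/-- `(a,b,c)` are the angles of a spherical triangle: sum > π and triangle inequalities. -/
def IsSphericalTriple (a b c : ℝ) : Prop :=
  a + b + c > π ∧ b + c < a + π ∧ a + c < b + π ∧ a + b < c + π

lemma cos_lt_cos_of_abs_lt {x y : ℝ} (hxy : |x| < y) (hy : y ≤ π) : cos y < cos x := by
  rw [← cos_abs x]
  exact cos_lt_cos_of_nonneg_of_le_pi (abs_nonneg x) hy hxy

namespace IsSphericalTriple

variable {a b c : ℝ}

lemma rotate (h : IsSphericalTriple a b c) : IsSphericalTriple c a b := by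
  obtain ⟨hsum, ha, hb, hc⟩ := h
  exact ⟨by linarith, hc, by linarith, by linarith⟩

lemma swap_right (h : IsSphericalTriple a b c) : IsSphericalTriple a c b := by
  obtain ⟨hsum, ha, hb, hc⟩ := h
  exact ⟨by linarith, by linarith, hc, hb⟩

lemma left_mem_Ioo (h : IsSphericalTriple a b c) : a ∈ Set.Ioo 0 π := by
  obtain ⟨hsum, ha, hb, hc⟩ := h
  constructor <;> linarith

lemma sin_left_pos (h : IsSphericalTriple a b c) : 0 < sin a :=
  sin_pos_of_mem_Ioo h.left_mem_Ioo

lemma sin_middle_pos (h : IsSphericalTriple a b c) : 0 < sin b :=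
  h.rotate.rotate.sin_left_pos

lemma sin_right_pos (h : IsSphericalTriple a b c) : 0 < sin c :=
  h.rotate.sin_left_pos

lemma neg_one_lt_coshLen (h : IsSphericalTriple a b c) : -1 < coshLen a b c := by
  have hsin : 0 < sin b * sin c := mul_pos h.sin_middle_pos h.sin_right_pos
  obtain ⟨ha₀, -⟩ := h.left_mem_Ioo
  obtain ⟨-, -, hb, hc⟩ := h
  have hcos : cos (π - a) < cos (b - c) :=
    cos_lt_cos_of_abs_lt (abs_lt.2 ⟨by linarith, by linarith⟩) (by linarith)
  rw [cos_pi_sub, cos_sub] at hcos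
  rw [coshLen, lt_div_iff₀ hsin]
  linarith

lemma coshLen_lt_one (h : IsSphericalTriple a b c) : coshLen a b c < 1 := by
  have hsin : 0 < sin b * sin c := mul_pos h.sin_middle_pos h.sin_right_pos
  obtain ⟨-, haπ⟩ := h.left_mem_Ioo
  obtain ⟨hsum, ha, -, -⟩ := h
  have hcos : cos a < cos (b + c - π) :=
    cos_lt_cos_of_abs_lt (abs_lt.2 ⟨by linarith, by linarith⟩) haπ.le
  rw [cos_sub_pi, cos_add] at hcos
  rw [coshLen, div_lt_one hsin]
  linarith

lemma cos_arccos_coshLen (h : IsSphericalTriple a b c) :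
    cos (arccos (coshLen a b c)) = coshLen a b c :=
  cos_arccos h.neg_one_lt_coshLen.le h.coshLen_lt_one.le

end IsSphericalTriple

/-- The Gram determinant of the vertex figure with dihedral angles `a`, `b`, `c`: the
determinant of the Gram matrix of the outward unit normals of a trihedral angle. -/
noncomputable def gramDet (a b c : ℝ) : ℝ :=
  !![1, -cos a, -cos b;
     -cos a, 1, -cos c;
     -cos b, -cos c, 1].det

/-- The `(1, 2)` cofactor of the Gram matrix of a tetrahedron with dihedral angles `αᵢⱼ`. Rows
and columns are indexed by the faces, the face `i` being the one opposite the vertex `i`, so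
that the entry `(k, l)` is `-cos αᵢⱼ` with `{i, j, k, l} = {1, 2, 3, 4}`. -/
noncomputable def gramCofactor (α₁₂ α₁₃ α₁₄ α₂₃ α₂₄ α₃₄ : ℝ) : ℝ :=
  -!![-cos α₃₄, -cos α₁₄, -cos α₁₃;
      -cos α₂₄, 1, -cos α₁₂;
      -cos α₂₃, -cos α₁₂, 1].det

lemma gramDet_eq (a b c : ℝ) :
    gramDet a b c =
      1 - cos a ^ 2 - cos b ^ 2 - cos c ^ 2 - 2 * cos a * cos b * cos c := by
  simp only [gramDet, Matrix.det_fin_three, Matrix.of_apply, Matrix.cons_val]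
  ring

lemma gramCofactor_eq (α₁₂ α₁₃ α₁₄ α₂₃ α₂₄ α₃₄ : ℝ) :
    gramCofactor α₁₂ α₁₃ α₁₄ α₂₃ α₂₄ α₃₄ =
      sin α₁₂ ^ 2 * cos α₃₄ + cos α₁₃ * cos α₂₃ + cos α₁₄ * cos α₂₄ +
        cos α₁₂ * (cos α₁₃ * cos α₂₄ + cos α₁₄ * cos α₂₃) := by
  simp only [gramCofactor, Matrix.det_fin_three, Matrix.of_apply, Matrix.cons_val]
  rw [sin_sq]
  ring

lemma gramDet_reverse (a b c : ℝ) : gramDet c b a = gramDet a b c := by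
  rw [gramDet_eq, gramDet_eq]
  ring

lemma gramCofactor_swap_three_four (α₁₂ α₁₃ α₁₄ α₂₃ α₂₄ α₃₄ : ℝ) :
    gramCofactor α₁₂ α₁₄ α₁₃ α₂₄ α₂₃ α₃₄ = gramCofactor α₁₂ α₁₃ α₁₄ α₂₃ α₂₄ α₃₄ := by
  rw [gramCofactor_eq, gramCofactor_eq]
  ring

lemma one_sub_coshLen_sq (a : ℝ) {b c : ℝ} (hb : sin b ≠ 0) (hc : sin c ≠ 0) :
    1 - coshLen a b c ^ 2 = gramDet a b c / (sin b * sin c) ^ 2 := by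
  rw [coshLen, gramDet_eq]
  field_simp
  rw [sin_sq, sin_sq]
  ring

lemma sin_arccos_coshLen (a : ℝ) {b c : ℝ} (hb : 0 < sin b) (hc : 0 < sin c) :
    sin (arccos (coshLen a b c)) = √(gramDet a b c) / (sin b * sin c) := by
  rw [sin_arccos, one_sub_coshLen_sq a hb.ne' hc.ne', sqrt_div' _ (sq_nonneg _),
    sqrt_sq (mul_pos hb hc).le]

lemma coshLen_add_coshLen_mul_coshLen {α₁₂ α₁₃ α₂₃ : ℝ} (α₁₄ α₂₄ α₃₄ : ℝ)
    (h₁₂ : sin α₁₂ ≠ 0) (h₁₃ : sin α₁₃ ≠ 0) (h₂₃ : sin α₂₃ ≠ 0) :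
    coshLen α₃₄ α₁₃ α₂₃ + coshLen α₁₄ α₁₂ α₁₃ * coshLen α₂₄ α₁₂ α₂₃ =
      gramCofactor α₁₂ α₁₃ α₁₄ α₂₃ α₂₄ α₃₄ / (sin α₁₂ * sin α₁₃ * (sin α₁₂ * sin α₂₃)) := by
  rw [gramCofactor_eq]
  simp only [coshLen]
  field_simp
  rw [sin_sq]
  ring

lemma coshLen_arccos_coshLen {α₁₂ α₁₃ α₁₄ α₂₃ α₂₄ α₃₄ : ℝ}
    (hv₁ : IsSphericalTriple α₁₄ α₁₂ α₁₃) (hv₂ : IsSphericalTriple α₂₄ α₁₂ α₂₃)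
    (hv₃ : IsSphericalTriple α₃₄ α₁₃ α₂₃) :
    coshLen (arccos (coshLen α₃₄ α₁₃ α₂₃)) (arccos (coshLen α₁₄ α₁₂ α₁₃))
        (arccos (coshLen α₂₄ α₁₂ α₂₃)) =
      gramCofactor α₁₂ α₁₃ α₁₄ α₂₃ α₂₄ α₃₄ /
        (√(gramDet α₁₄ α₁₂ α₁₃) * √(gramDet α₂₄ α₁₂ α₂₃)) := by
  have h₁₂ : 0 < sin α₁₂ := hv₁.sin_middle_pos
  have h₁₃ : 0 < sin α₁₃ := hv₁.sin_right_pos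
  have h₂₃ : 0 < sin α₂₃ := hv₂.sin_right_pos
  rw [coshLen, hv₁.cos_arccos_coshLen, hv₂.cos_arccos_coshLen, hv₃.cos_arccos_coshLen,
    sin_arccos_coshLen α₁₄ h₁₂ h₁₃, sin_arccos_coshLen α₂₄ h₁₂ h₂₃,
    coshLen_add_coshLen_mul_coshLen α₁₄ α₂₄ α₃₄ h₁₂.ne' h₁₃.ne' h₂₃.ne', div_mul_div_comm,
    div_div_div_cancel_right₀ (by positivity)]

/-- For an angle system (α_{ij}) on the tetrahedron (six angles in (0,π),
with the link triple at each vertex spherical), the cosh-length of the edge {1,2}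
computed in the face {1,2,3} agrees with the one computed in the face {1,2,4}.
Here the face angle β^i_{jk} (at vertex i, between the edges to j and k, l being the
fourth vertex) is arccos (coshLen α_{il} α_{ij} α_{ik}), and the cosh-length of the
edge {i,j} in the face {i,j,k} is coshLen β^k_{ij} β^i_{jk} β^j_{ik}. -/
theorem edge_length_well_defined
    (α₁₂ α₁₃ α₁₄ α₂₃ α₂₄ α₃₄ : ℝ)
    (h₁₂ : α₁₂ ∈ Set.Ioo 0 π) (h₁₃ : α₁₃ ∈ Set.Ioo 0 π) (h₁₄ : α₁₄ ∈ Set.Ioo 0 π)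
    (h₂₃ : α₂₃ ∈ Set.Ioo 0 π) (h₂₄ : α₂₄ ∈ Set.Ioo 0 π) (h₃₄ : α₃₄ ∈ Set.Ioo 0 π)
    (hv₁ : IsSphericalTriple α₁₂ α₁₃ α₁₄)
    (hv₂ : IsSphericalTriple α₁₂ α₂₃ α₂₄)
    (hv₃ : IsSphericalTriple α₁₃ α₂₃ α₃₄)
    (hv₄ : IsSphericalTriple α₁₄ α₂₄ α₃₄) :
    let β₁₂₃ := Real.arccos (coshLen α₁₄ α₁₂ α₁₃)  -- face angle at vertex 1 in face {1,2,3}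
    let β₂₁₃ := Real.arccos (coshLen α₂₄ α₁₂ α₂₃)  -- face angle at vertex 2 in face {1,2,3}
    let β₃₁₂ := Real.arccos (coshLen α₃₄ α₁₃ α₂₃)  -- face angle at vertex 3 in face {1,2,3}
    let β₁₂₄ := Real.arccos (coshLen α₁₃ α₁₂ α₁₄)  -- face angle at vertex 1 in face {1,2,4}
    let β₂₁₄ := Real.arccos (coshLen α₂₃ α₁₂ α₂₄)  -- face angle at vertex 2 in face {1,2,4}
    let β₄₁₂ := Real.arccos (coshLen α₃₄ α₁₄ α₂₄)  -- face angle at vertex 4 in face {1,2,4}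
    (cos β₃₁₂ + cos β₁₂₃ * cos β₂₁₃) / (sin β₁₂₃ * sin β₂₁₃) =
      (cos β₄₁₂ + cos β₁₂₄ * cos β₂₁₄) / (sin β₁₂₄ * sin β₂₁₄) := by
  intro β₁₂₃ β₂₁₃ β₃₁₂ β₁₂₄ β₂₁₄ β₄₁₂
  calc
    coshLen β₃₁₂ β₁₂₃ β₂₁₃
    _ = gramCofactor α₁₂ α₁₃ α₁₄ α₂₃ α₂₄ α₃₄ /
          (√(gramDet α₁₄ α₁₂ α₁₃) * √(gramDet α₂₄ α₁₂ α₂₃)) :=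
      coshLen_arccos_coshLen hv₁.rotate hv₂.rotate hv₃.rotate
    _ = gramCofactor α₁₂ α₁₄ α₁₃ α₂₄ α₂₃ α₃₄ /
          (√(gramDet α₁₃ α₁₂ α₁₄) * √(gramDet α₂₃ α₁₂ α₂₄)) := by
      rw [gramCofactor_swap_three_four, gramDet_reverse α₁₄, gramDet_reverse α₂₄]
    _ = coshLen β₄₁₂ β₁₂₄ β₂₁₄ :=
      (coshLen_arccos_coshLen hv₁.swap_right.rotate hv₂.swap_right.rotate hv₄.rotate).symm
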